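/- Let σ be a noncrossing partition of [n]. An (n−1)-element subset I ⊆ [2n] is concordant with σ if and only if I_a(σ) ≤_a I for every a ∈ [2n], in the a-shifted dominance order. -/

import Mathlib

open Finset

noncomputable section
open scoped Classical

/-- The cyclic (clockwise) half-open interval `(a, b]` in `Fin m`. -/
def cIoc {m : ℕ} (a b : Fin m) : Finset (Fin m) :=
  univ.filter fun k => if a < b then a < k ∧ k ≤ b else a < k ∨ k ≤ b

/-- The open cyclic (clockwise) arc from `a` to `b` in `Fin m`, excluding both endpoints. -/
def cIoo {m : ℕ} (a b : Fin m) : Finset (Fin m) :=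
  univ.filter fun k => if a < b then a < k ∧ k < b else (a < k ∨ k < b) ∧ k ≠ a ∧ k ≠ b

/-- Set partitions of `[n] = Fin n`. -/
abbrev NCP (n : ℕ) := Finpartition (univ : Finset (Fin n))

/-- `a` and `b` lie in the same block of `σ`. -/
def sameBlock {n : ℕ} (σ : NCP n) (a b : Fin n) : Prop :=
  ∃ B ∈ σ.parts, a ∈ B ∧ b ∈ B

/-- `σ` is a noncrossing partition: there are no `a < b < c < d` with `a, c` in one
block and `b, d` in a different block. -/
def IsNoncrossing {n : ℕ} (σ : NCP n) : Prop :=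
  ∀ a b c d : Fin n, a < b → b < c → c < d →
    sameBlock σ a c → sameBlock σ b d → sameBlock σ a b

/-- The relation defining the dual (Kreweras complement) partition: `ĩ ~ j̃` iff no block
of `σ` meets both cyclic intervals `{(i+1), …, j}` and `{(j+1), …, i}`. -/
def dualRel {n : ℕ} (σ : NCP n) (i j : Fin n) : Prop :=
  i = j ∨ ¬ ∃ B ∈ σ.parts, (B ∩ cIoc i j).Nonempty ∧ (B ∩ cIoc j i).Nonempty

/-- The point `ī` of `[2n]` (0-based: `ī = 2i`). -/
def bar {n : ℕ} (i : Fin n) : Fin (2*n) := ⟨2*(i:ℕ), by have := i.isLt; omega⟩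

/-- The point `ĩ` of `[2n]` (0-based: `ĩ = 2i+1`). -/
def til {n : ℕ} (i : Fin n) : Fin (2*n) := ⟨2*(i:ℕ)+1, by have := i.isLt; omega⟩

/-- A matching (fixed-point-free involution) of `Fin m`. -/
def IsMatching {m : ℕ} (τ : Fin m → Fin m) : Prop :=
  Function.Involutive τ ∧ ∀ i, τ i ≠ i

/-- A noncrossing matching: there are no `a < b < c < d` with `τ a = c` and `τ b = d`. -/
def IsNCMatching {m : ℕ} (τ : Fin m → Fin m) : Prop :=
  ¬ ∃ a b c d : Fin m, a < b ∧ b < c ∧ c < d ∧ τ a = c ∧ τ b = d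

/-- `j` is the cyclic predecessor of `i` in the block of `σ` containing `i`
(`j = i` when `i` is a singleton). -/
def cyclicPred {n : ℕ} (σ : NCP n) (j i : Fin n) : Prop :=
  ∃ B ∈ σ.parts, i ∈ B ∧ j ∈ B ∧ ∀ x ∈ B, x ∉ cIoo j i

/-- `m` is the medial pairing of `σ`: it pairs `ī` (0-based `2i`) with `j̃` (0-based `2j+1`),
where `j` is the cyclic predecessor of `i` in its block. -/
def IsMedialOf {n : ℕ} (σ : NCP n) (m : Fin (2*n) → Fin (2*n)) : Prop :=
  ∀ i j : Fin n, m (bar i) = til j ↔ cyclicPred σ j i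

/-- The crossing number of a matching: the number of pairs `{a,b}` with
`a < b < τ a < τ b`. -/
def crossNum {m : ℕ} (τ : Fin m → Fin m) : ℕ :=
  ((univ : Finset (Fin m × Fin m)).filter fun p =>
    p.1 < p.2 ∧ p.2 < τ p.1 ∧ τ p.1 < τ p.2).card

/-- `a`, `b`, `c`, `d` are distinct and in cyclic order on `Fin m`. -/
def CyclicOrder4 {m : ℕ} (a b c d : Fin m) : Prop :=
  (a < b ∧ b < c ∧ c < d) ∨ (b < c ∧ c < d ∧ d < a) ∨
  (c < d ∧ d < a ∧ a < b) ∨ (d < a ∧ a < b ∧ b < c)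

/-- `τ` covers `τ'` in the uncrossing order. -/
def UncrossCover {m : ℕ} (τ' τ : Fin m → Fin m) : Prop :=
  IsMatching τ' ∧ IsMatching τ ∧
  ∃ a b c d : Fin m, CyclicOrder4 a b c d ∧ τ a = c ∧ τ b = d ∧
    (∀ x, x ≠ a → x ≠ b → x ≠ c → x ≠ d → τ' x = τ x) ∧
    ((τ' a = d ∧ τ' b = c ∧ ∀ x ∈ cIoo a b, τ x ∉ cIoo c d) ∨
     (τ' a = b ∧ τ' c = d ∧ ∀ x ∈ cIoo b c, τ x ∉ cIoo d a))

/-- The uncrossing partial order on matchings: reflexive-transitive closure of covers. -/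
def uncrossLE {m : ℕ} (τ' τ : Fin m → Fin m) : Prop :=
  Relation.ReflTransGen UncrossCover τ' τ

/-- An affine permutation of period `m`. -/
def IsAffinePerm (m : ℕ) (f : ℤ → ℤ) : Prop :=
  Function.Bijective f ∧ ∀ i : ℤ, f (i + m) = f i + m

/-- The length of an affine permutation of period `m`:
`#{(i,j) : 1 ≤ i ≤ m, i < j, f i > f j}`. -/
def affLen (m : ℕ) (f : ℤ → ℤ) : ℕ :=
  Set.ncard {p : ℤ × ℤ | 1 ≤ p.1 ∧ p.1 ≤ (m:ℤ) ∧ p.1 < p.2 ∧ f p.2 < f p.1}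

/-- The affine rank matrix `r_f(i,j) = #{a ≤ i : f a ≥ j}`. -/
def rankMat (f : ℤ → ℤ) (i j : ℤ) : ℕ :=
  Set.ncard {a : ℤ | a ≤ i ∧ j ≤ f a}

/-- Affine Bruhat order via rank matrices. -/
def bruhatLE (f g : ℤ → ℤ) : Prop := ∀ i j : ℤ, rankMat f i j ≤ rankMat g i j

/-- The sum `Σ_{i=1}^m (f i − i)`. -/
def windowSum (m : ℕ) (f : ℤ → ℤ) : ℤ :=
  ∑ i ∈ Finset.range m, (f ((i:ℤ)+1) - ((i:ℤ)+1))

/-- The affine permutation `g_τ` associated to a matching `τ` of `[2n]`: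
on `[2n]`, `g_τ i = τ i` if `τ i > i` and `g_τ i = τ i + 2n` if `τ i < i`,
extended periodically. -/
def gTau (n : ℕ) (τ : Fin (2*n) → Fin (2*n)) (i : ℤ) : ℤ :=
  if h : (i % ((2*n : ℕ) : ℤ)).toNat < 2*n then
    let r : Fin (2*n) := ⟨(i % ((2*n : ℕ) : ℤ)).toNat, h⟩
    (i - i % ((2*n : ℕ) : ℤ)) +
      (if r < τ r then ((τ r : ℕ) : ℤ) else ((τ r : ℕ) : ℤ) + 2*n)
  else i

/-- `f_τ = g_τ − 1`. -/
def fTau (n : ℕ) (τ : Fin (2*n) → Fin (2*n)) (i : ℤ) : ℤ := gTau n τ i - 1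

/-- An electrical affine permutation for `n`. -/
def IsElectrical (n : ℕ) (f : ℤ → ℤ) : Prop :=
  IsAffinePerm (2*n) f ∧
  (∀ i : ℤ, i ≤ f i ∧ f i ≤ i + 2*n - 2) ∧
  windowSum (2*n) f = ((n:ℤ) - 1) * (2*n) ∧
  ∀ i : ℤ, (f (f i + 1) - (i - 1)) % ((2*n : ℕ) : ℤ) = 0

/-- The Grassmann necklace subset `I_a(f) ⊆ [m]`: representatives in `[m]` (0-based) of
`{f b mod m : b < a and f b ≥ a}`. -/
def necklaceI (m : ℕ) (f : ℤ → ℤ) (a : ℤ) : Finset (Fin m) :=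
  univ.filter fun x => ∃ b : ℤ, b < a ∧ a ≤ f b ∧ f b % (m:ℤ) = ((x:ℕ):ℤ)

/-- The dual necklace subset `J_a(f) ⊆ [m]`: representatives in `[m]` (0-based) of
`{b mod m : b < a and f b ≥ a}`. -/
def necklaceJ (m : ℕ) (f : ℤ → ℤ) (a : ℤ) : Finset (Fin m) :=
  univ.filter fun x => ∃ b : ℤ, b < a ∧ a ≤ f b ∧ b % (m:ℤ) = ((x:ℕ):ℤ)

/-- Dominance order on `k`-element subsets of `Fin m`:
the `r`-th smallest element of `I` is at most the `r`-th smallest element of `J`. -/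
def domLE {m : ℕ} (k : ℕ) (I J : Finset (Fin m)) : Prop :=
  ∃ (hI : I.card = k) (hJ : J.card = k),
    ∀ r : Fin k, I.orderEmbOfFin hI r ≤ J.orderEmbOfFin hJ r

/-- `a`-shifted dominance order: rotate so that `a` becomes least, then compare. -/
def sdomLE {m : ℕ} (k : ℕ) (a : Fin m) (I J : Finset (Fin m)) : Prop :=
  domLE k (I.image (· - a)) (J.image (· - a))

/-- `a`-shifted lexicographic order on subsets of `Fin m`. -/
def lexLE {m : ℕ} (a : Fin m) (I J : Finset (Fin m)) : Prop :=
  I = J ∨ List.Lex (· < ·) ((I.image (· - a)).sort (· ≤ ·)) ((J.image (· - a)).sort (· ≤ ·))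

/-- A Catalan subset of `[2n]` (0-based): an `(n−1)`-subset such that the length-`2n`
word with `U` at positions `{0} ∪ {x+1 : x ∈ I}` and `D` elsewhere is a Dyck path. -/
def IsCatalan {n : ℕ} (I : Finset (Fin (2*n))) : Prop :=
  I.card = n - 1 ∧
  ∀ p : ℕ, p ≤ 2*n →
    p ≤ 2 * ((insert 0 (I.image fun x => (x:ℕ)+1)).filter (· < p)).card

/-- Catalan subset with respect to the shifted order `≤_a`. -/
def IsCatalanAt {n : ℕ} (a : Fin (2*n)) (I : Finset (Fin (2*n))) : Prop :=
  IsCatalan (I.image (· - a))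

/-- The set of maxima of `S` with respect to the `a`-shifted order. -/
def maxAt {m : ℕ} (a : Fin m) (S : Finset (Fin m)) : Finset (Fin m) :=
  S.filter fun x => ∀ y ∈ S, y - a ≤ x - a

/-- `I_a(σ)` for a noncrossing partition `σ`: the complement in `[2n]` of the set of
`≤_a`-maxima of the blocks of `σ` (embedded by `bar`) and of the blocks of the dual
partition `σ̃` (embedded by `til`). -/
def IaP {n : ℕ} (σ : NCP n) (a : Fin (2*n)) : Finset (Fin (2*n)) :=
  univ \ ((σ.parts.biUnion fun B => maxAt a (B.image bar)) ∪
          ((univ : Finset (Fin n)).biUnion fun i =>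
            maxAt a ((univ.filter (dualRel σ i)).image til)))

/-- `I` is concordant with `σ`: `I` has `n−1` elements and every block of `σ` and of
its dual `σ̃` contains exactly one element of `[2n] ∖ I`. -/
def Concordant {n : ℕ} (σ : NCP n) (I : Finset (Fin (2*n))) : Prop :=
  I.card = n - 1 ∧
  (∀ B ∈ σ.parts, ((B.image bar) ∩ (univ \ I)).card = 1) ∧
  (∀ i : Fin n, (((univ.filter (dualRel σ i)).image til) ∩ (univ \ I)).card = 1)

/-- `E(I)`: the set of noncrossing partitions concordant with `I`. -/
def ESet {n : ℕ} (I : Finset (Fin (2*n))) : Set (NCP n) :=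
  {σ | IsNoncrossing σ ∧ Concordant σ I}

/-- The maximal minor `Δ_I(X)` on the columns indexed by `I`, in increasing order. -/
def minorOn {k m : ℕ} (X : Matrix (Fin k) (Fin m) ℝ) (I : Finset (Fin m)) : ℝ :=
  if h : I.card = k then (X.submatrix id fun r => I.orderEmbOfFin h r).det else 0

/-- `X` is totally nonnegative: it has full rank `k` and all maximal minors are `≥ 0`. -/
def IsTNN {k m : ℕ} (X : Matrix (Fin k) (Fin m) ℝ) : Prop :=
  X.rank = k ∧ ∀ I : Finset (Fin m), I.card = k → 0 ≤ minorOn X I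

/-- `t` times the matrix unit `E_{p,q}` (0-based indices). -/
def matE (m : ℕ) (p q : ℕ) (t : ℝ) : Matrix (Fin m) (Fin m) ℝ :=
  Matrix.of fun r s => if (r:ℕ) = p ∧ (s:ℕ) = q then t else 0

/-- `x_i(t) = Id + t·E_{i,i+1}` (1-based index `i`). -/
def xB (m i : ℕ) (t : ℝ) : Matrix (Fin m) (Fin m) ℝ := 1 + matE m (i-1) i t

/-- `y_i(t) = Id + t·E_{i+1,i}` (1-based index `i`). -/
def yB (m i : ℕ) (t : ℝ) : Matrix (Fin m) (Fin m) ℝ := 1 + matE m i (i-1) t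

/-- `u_i(t) = x_i(t)·y_{i−1}(t)` (1-based index `i`). -/
def uB (m i : ℕ) (t : ℝ) : Matrix (Fin m) (Fin m) ℝ := xB m i t * yB m (i-1) t

/-- The columns of `X`, extended `n`-periodically to all integer indices (0-based). -/
def colP {k n : ℕ} (X : Matrix (Fin k) (Fin n) ℝ) (i : ℤ) : Fin k → ℝ :=
  fun r => if h : (i % (n:ℤ)).toNat < n then X r ⟨(i % (n:ℤ)).toNat, h⟩ else 0

/-- `f_X(i) = min { j ≥ i : v_i ∈ span(v_{i+1}, …, v_j) }` (0-based columns). -/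
def fX {k n : ℕ} (X : Matrix (Fin k) (Fin n) ℝ) (i : ℤ) : ℤ :=
  sInf {j : ℤ | i ≤ j ∧ colP X i ∈ Submodule.span ℝ (colP X '' Set.Ioc i j)}

/-- Fintype instance for finite partitions of a finite set. -/
instance {α : Type*} [DecidableEq α] [Fintype α] (s : Finset α) : Fintype (Finpartition s) :=
  Fintype.ofInjective Finpartition.parts fun _ _ h => Finpartition.ext h

/-- The sorted list of (the values of) a subset of `Fin m`. -/
def sortedL {m : ℕ} (I : Finset (Fin m)) : List ℕ :=
  (I.sort (· ≤ ·)).map Fin.val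

/-- The number of inversions of a list (= the number of adjacent transpositions
needed to sort it, when entries are distinct). -/
def invNum (l : List ℕ) : ℕ :=
  ((Finset.range l.length ×ˢ Finset.range l.length).filter fun pq =>
    pq.1 < pq.2 ∧ l.getD pq.2 0 < l.getD pq.1 0).card

/-- The subset of `Fin m` whose values lie in the list `l`. -/
def toFinF {m : ℕ} (l : List ℕ) : Finset (Fin m) :=
  univ.filter fun x => (x:ℕ) ∈ l

/-- The double sum `Σ_{σ ∈ E(l), κ ∈ E(l')} L σ · L κ`, where `E` of a list with a
repeated entry (or an out-of-range entry) is empty. -/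
def pairSum {n : ℕ} (L : NCP n → ℝ) (l l' : List ℕ) : ℝ :=
  if (l.Nodup ∧ ∀ x ∈ l, x < 2*n) ∧ (l'.Nodup ∧ ∀ x ∈ l', x < 2*n) then
    ∑ᶠ σ ∈ ESet (n := n) (toFinF l), ∑ᶠ κ ∈ ESet (n := n) (toFinF l'), L σ * L κ
  else 0

/-- The list obtained from `LI` by replacing its entries at the positions in `S`
(in increasing order of position) by the first `#S` entries of `LJ`. -/
def swapI (LI LJ : List ℕ) (S : Finset ℕ) : List ℕ :=
  (List.range LI.length).map fun p =>
    if p ∈ S then LJ.getD ((S.filter (· < p)).card) 0 else LI.getD p 0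

/-- The list obtained from `LJ` by replacing its first `#S` entries by the entries of
`LI` at the positions in `S`, in increasing order. -/
def swapJ (LI LJ : List ℕ) (S : Finset ℕ) : List ℕ :=
  (List.range LJ.length).map fun p =>
    if p < S.card then LI.getD ((S.sort (· ≤ ·)).getD p 0) 0 else LJ.getD p 0

theorem domLE_iff_card_filter_lt {m k : ℕ} (I J : Finset (Fin m)) :
    domLE k I J ↔ I.card = k ∧ J.card = k ∧
      ∀ t : Fin m, (J.filter (· < t)).card ≤ (I.filter (· < t)).card := by
  have count : ∀ (S : Finset (Fin m)) (hS : S.card = k) (t : Fin m),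
      (S.filter (· < t)).card = (univ.filter fun r : Fin k => S.orderEmbOfFin hS r < t).card := by
    intro S hS t
    rw [← card_map (S.orderEmbOfFin hS).toEmbedding]
    congr 1
    ext x
    simp only [mem_filter, mem_map, mem_univ, true_and]
    constructor
    · rintro ⟨hx, hxt⟩
      have hx' : x ∈ Set.range (S.orderEmbOfFin hS) := by simpa using hx
      obtain ⟨r, rfl⟩ := hx'
      exact ⟨r, hxt, rfl⟩
    · rintro ⟨r, hr, rfl⟩
      exact ⟨orderEmbOfFin_mem S hS r, hr⟩
  constructor
  · rintro ⟨hI, hJ, h⟩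
    refine ⟨hI, hJ, fun t => ?_⟩
    rw [count I hI, count J hJ]
    refine card_le_card fun r hr => ?_
    simp only [mem_filter, mem_univ, true_and] at hr ⊢
    exact (h r).trans_lt hr
  · rintro ⟨hI, hJ, h⟩
    refine ⟨hI, hJ, fun r => ?_⟩
    by_contra! hlt
    have ht := h (I.orderEmbOfFin hI r)
    rw [count I hI, count J hJ] at ht
    have h1 : (univ.filter fun s : Fin k => I.orderEmbOfFin hI s < I.orderEmbOfFin hI r).card
        = r := by
      simp only [OrderEmbedding.lt_iff_lt]
      rw [filter_gt_eq_Iio, Fin.card_Iio]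
    have h2 : (Iic r).card ≤ (univ.filter fun s : Fin k =>
        J.orderEmbOfFin hJ s < I.orderEmbOfFin hI r).card := by
      refine card_le_card fun s hs => ?_
      simp only [mem_filter, mem_univ, true_and]
      exact ((J.orderEmbOfFin hJ).monotone (mem_Iic.1 hs)).trans_lt hlt
    rw [Fin.card_Iic] at h2
    omega

theorem sdomLE_iff_card_filter_lt {m k : ℕ} [NeZero m] (a : Fin m) (I J : Finset (Fin m)) :
    sdomLE k a I J ↔ I.card = k ∧ J.card = k ∧
      ∀ t : Fin m, (J.filter (· - a < t)).card ≤ (I.filter (· - a < t)).card := by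
  have hinj : Function.Injective fun x : Fin m => x - a := sub_left_injective
  simp only [sdomLE, domLE_iff_card_filter_lt, filter_image, card_image_of_injective _ hinj]

theorem Fin.val_sub_eq_ite {m : ℕ} (x a : Fin m) :
    (x - a).val = if a.val ≤ x.val then x.val - a.val else m + x.val - a.val := by
  split_ifs with h
  · exact Fin.sub_val_of_le h
  · exact Fin.coe_sub_iff_lt.2 (not_le.1 h)

theorem Fin.val_add_one_eq_ite {m : ℕ} [NeZero m] (b : Fin m) :
    (b + 1).val = if b.val + 1 = m then 0 else b.val + 1 := by
  obtain ⟨k, rfl⟩ := Nat.exists_eq_succ_of_ne_zero (NeZero.ne m)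
  rw [Fin.val_add_one]
  simp [Fin.ext_iff]

theorem exists_maxAt_eq_singleton {m : ℕ} [NeZero m] (a : Fin m) {B : Finset (Fin m)}
    (hB : B.Nonempty) : ∃ x ∈ B, maxAt a B = {x} ∧ ∀ y ∈ B, y - a ≤ x - a := by
  obtain ⟨x, hx, hmax⟩ := exists_max_image B (· - a) hB
  refine ⟨x, hx, ?_, hmax⟩
  ext y
  simp only [maxAt, mem_filter, mem_singleton]
  constructor
  · rintro ⟨hy, h⟩
    exact sub_left_injective (le_antisymm (hmax y hy) (h x hx))
  · rintro rfl
    exact ⟨hx, hmax⟩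

theorem maxAt_subset {m : ℕ} (a : Fin m) (B : Finset (Fin m)) : maxAt a B ⊆ B :=
  filter_subset _ _

section Partition

variable {m : ℕ} (P : Finpartition (univ : Finset (Fin m)))

theorem pairwiseDisjoint_maxAt (a : Fin m) :
    (P.parts : Set (Finset (Fin m))).PairwiseDisjoint (maxAt a) :=
  P.disjoint.mono fun B => maxAt_subset a B

theorem sum_card_parts_inter (K : Finset (Fin m)) : ∑ B ∈ P.parts, (B ∩ K).card = K.card := by
  have hdisj : (P.parts : Set (Finset (Fin m))).PairwiseDisjoint (· ∩ K) :=
    P.disjoint.mono fun B => inter_subset_left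
  have hunion : P.parts.biUnion (· ∩ K) = K := by
    rw [← biUnion_inter]
    change P.parts.biUnion id ∩ K = K
    rw [P.biUnion_parts, univ_inter]
  rw [← card_biUnion hdisj, hunion]

theorem card_filter_parts_le {K : Finset (Fin m)} (h : ∀ B ∈ P.parts, (B ∩ K).card = 1)
    (p : Fin m → Prop) [DecidablePred p] :
    (P.parts.filter fun B => ∀ x ∈ B, p x).card ≤ (K.filter p).card := by
  rw [← sum_card_parts_inter P (K.filter p), card_filter]
  refine sum_le_sum fun B hB => ?_
  split_ifs with hp
  · rw [← h B hB]
    refine card_le_card fun x hx => ?_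
    rw [mem_inter] at hx
    simp [hx.1, hx.2, hp x hx.1]
  · exact Nat.zero_le _

variable [NeZero m]

theorem card_biUnion_maxAt (a : Fin m) : (P.parts.biUnion (maxAt a)).card = P.parts.card := by
  rw [card_biUnion (pairwiseDisjoint_maxAt P a), card_eq_sum_ones]
  refine sum_congr rfl fun B hB => ?_
  obtain ⟨x, -, hx, -⟩ := exists_maxAt_eq_singleton a (P.nonempty_of_mem_parts hB)
  rw [hx, card_singleton]

theorem card_filter_biUnion_maxAt (a t : Fin m) :
    ((P.parts.biUnion (maxAt a)).filter (· - a < t)).card =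
      (P.parts.filter fun B => ∀ x ∈ B, x - a < t).card := by
  rw [filter_biUnion, card_biUnion, card_filter]
  · refine sum_congr rfl fun B hB => ?_
    obtain ⟨x, hxB, hx, hmax⟩ := exists_maxAt_eq_singleton a (P.nonempty_of_mem_parts hB)
    rw [hx, filter_singleton]
    by_cases h : x - a < t
    · rw [if_pos h, if_pos fun y hy => (hmax y hy).trans_lt h, card_singleton]
    · rw [if_neg h, if_neg fun h' => h (h' x hxB), card_empty]
  · exact (pairwiseDisjoint_maxAt P a).mono fun B => filter_subset _ _

/-- For `b ∈ B`, the open cyclic arc from `b` to the next element of `B`. -/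
def arcAfter (B : Finset (Fin m)) (b : Fin m) : Finset (Fin m) :=
  univ.filter fun x => ∀ c ∈ B, x - (b + 1) < c - (b + 1)

theorem exists_arcAfter_eq {B : Finset (Fin m)} (hB : B.Nonempty) (b : Fin m) :
    ∃ t : Fin m, arcAfter B b = univ.filter (· - (b + 1) < t) := by
  obtain ⟨c, hc, hmin⟩ := exists_min_image B (· - (b + 1)) hB
  refine ⟨c - (b + 1), ?_⟩
  ext x
  simp only [arcAfter, mem_filter, mem_univ, true_and]
  exact ⟨fun h => h c hc, fun h d hd => h.trans_le (hmin d hd)⟩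

theorem disjoint_arcAfter (B : Finset (Fin m)) (b : Fin m) : Disjoint B (arcAfter B b) := by
  rw [disjoint_left]
  intro x hx hx'
  exact lt_irrefl _ ((mem_filter.1 hx').2 x hx)

theorem pairwiseDisjoint_arcAfter (B : Finset (Fin m)) :
    (B : Set (Fin m)).PairwiseDisjoint (arcAfter B) := by
  intro b hb c hc hbc
  rw [Function.onFun, disjoint_left]
  intro x hxb hxc
  have h1 := (mem_filter.1 hxb).2 c hc
  have h2 := (mem_filter.1 hxc).2 b hb
  rw [Fin.lt_def] at h1 h2
  simp only [Fin.val_sub_eq_ite, Fin.val_add_one_eq_ite] at h1 h2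
  have := x.isLt
  have := b.isLt
  have := c.isLt
  have hne : b.val ≠ c.val := fun h => hbc (Fin.ext h)
  split_ifs at h1 h2 <;> omega

/-- No two distinct parts of `P` cross. -/
def Finpartition.Noncrossing : Prop :=
  ∀ B ∈ P.parts, ∀ C ∈ P.parts, ∀ a ∈ B, ∀ b ∈ C, ∀ c ∈ B, ∀ d ∈ C,
    a < b → b < c → c < d → B = C

variable {P}

theorem Finpartition.Noncrossing.exists_subset_arcAfter (hP : P.Noncrossing)
    {B C : Finset (Fin m)} (hB : B ∈ P.parts) (hC : C ∈ P.parts) (hBC : C ≠ B) :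
    ∃ b ∈ B, C ⊆ arcAfter B b := by
  obtain ⟨x, hx⟩ := P.nonempty_of_mem_parts hC
  obtain ⟨b, hb, hmin⟩ := exists_min_image B (x - ·) (P.nonempty_of_mem_parts hB)
  have hne : ∀ y ∈ C, ∀ c ∈ B, y.val ≠ c.val := fun y hy c hc h =>
    disjoint_left.1 (P.disjoint hC hB hBC) hy (Fin.ext h ▸ hc)
  refine ⟨b, hb, fun y hy => ?_⟩
  simp only [arcAfter, mem_filter, mem_univ, true_and]
  intro c hc
  by_contra hlt
  have hxc := hmin c hc
  rw [Fin.lt_def] at hlt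
  rw [Fin.le_def] at hxc
  simp only [Fin.val_sub_eq_ite, Fin.val_add_one_eq_ite] at hlt hxc
  have hx1 := hne x hx b hb
  have hx2 := hne x hx c hc
  have hy1 := hne y hy b hb
  have hy2 := hne y hy c hc
  have := x.isLt
  have := y.isLt
  have := b.isLt
  have := c.isLt
  have hcross : (b < x ∧ x < c ∧ c < y) ∨ (x < c ∧ c < y ∧ y < b) ∨
      (c < y ∧ y < b ∧ b < x) ∨ (y < b ∧ b < x ∧ x < c) := by
    simp only [Fin.lt_def]
    split_ifs at hlt hxc <;> omega
  rcases hcross with ⟨h1, h2, h3⟩ | ⟨h1, h2, h3⟩ | ⟨h1, h2, h3⟩ | ⟨h1, h2, h3⟩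
  · exact hBC (hP B hB C hC b hb x hx c hc y hy h1 h2 h3).symm
  · exact hBC (hP C hC B hB x hx c hc y hy b hb h1 h2 h3)
  · exact hBC (hP B hB C hC c hc y hy b hb x hx h1 h2 h3).symm
  · exact hBC (hP C hC B hB y hy b hb x hx c hc h1 h2 h3)

theorem Finpartition.Noncrossing.card_inter_le_one (hP : P.Noncrossing) {K : Finset (Fin m)}
    (hK : K.card = P.parts.card)
    (h : ∀ a t : Fin m, (P.parts.filter fun B => ∀ x ∈ B, x - a < t).card ≤
      (K.filter (· - a < t)).card)
    {B : Finset (Fin m)} (hB : B ∈ P.parts) : (B ∩ K).card ≤ 1 := by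
  have harc : ∀ b ∈ B, (P.parts.filter (· ⊆ arcAfter B b)).card ≤ (arcAfter B b ∩ K).card := by
    intro b hb
    obtain ⟨t, ht⟩ := exists_arcAfter_eq (P.nonempty_of_mem_parts hB) b
    have := h (b + 1) t
    rw [ht, filter_inter, univ_inter]
    simpa only [subset_iff, mem_filter, mem_univ, true_and] using this
  have hcover : P.parts.erase B ⊆ B.biUnion fun b => P.parts.filter (· ⊆ arcAfter B b) := by
    intro C hC
    obtain ⟨hne, hC⟩ := mem_erase.1 hC
    obtain ⟨b, hb, hsub⟩ := hP.exists_subset_arcAfter hB hC hne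
    exact mem_biUnion.2 ⟨b, hb, mem_filter.2 ⟨hC, hsub⟩⟩
  have hlow : P.parts.card - 1 ≤ ∑ b ∈ B, (arcAfter B b ∩ K).card := by
    rw [← card_erase_of_mem hB]
    exact (card_le_card hcover).trans (card_biUnion_le.trans (sum_le_sum harc))
  have hup : (B ∩ K).card + ∑ b ∈ B, (arcAfter B b ∩ K).card ≤ K.card := by
    rw [← card_biUnion ((pairwiseDisjoint_arcAfter B).mono fun b => inter_subset_left),
      ← card_union_of_disjoint]
    · refine card_le_card (union_subset inter_subset_right ?_)
      exact biUnion_subset.2 fun b _ => inter_subset_right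
    · rw [disjoint_biUnion_right]
      exact fun b _ => (disjoint_arcAfter B b).mono inter_subset_left inter_subset_left
  omega

theorem Finpartition.Noncrossing.card_inter_eq_one (hP : P.Noncrossing) {K : Finset (Fin m)}
    (hK : K.card = P.parts.card)
    (h : ∀ a t : Fin m, (P.parts.filter fun B => ∀ x ∈ B, x - a < t).card ≤
      (K.filter (· - a < t)).card) :
    ∀ B ∈ P.parts, (B ∩ K).card = 1 := by
  refine (sum_eq_sum_iff_of_le fun B hB => hP.card_inter_le_one hK h hB).1 ?_
  rw [sum_card_parts_inter, hK, card_eq_sum_ones]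

theorem Finpartition.Noncrossing.card_inter_eq_one_iff (hP : P.Noncrossing) {k : ℕ}
    {I : Finset (Fin m)} (hI : I.card = k) :
    (∀ B ∈ P.parts, (B ∩ (univ \ I)).card = 1) ↔
      ∀ a, sdomLE k a (univ \ P.parts.biUnion (maxAt a)) I := by
  have hcompl : ∀ (S : Finset (Fin m)) (p : Fin m → Prop) [DecidablePred p],
      (S.filter p).card + ((univ \ S).filter p).card = (univ.filter p).card := by
    intro S p _
    rw [← card_union_of_disjoint (disjoint_filter_filter disjoint_sdiff), ← filter_union,
      union_sdiff_of_subset (subset_univ S)]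
  have hcard : ∀ S : Finset (Fin m), S.card + (univ \ S).card = m := by
    intro S
    simpa using hcompl S fun _ => True
  have hiff : ∀ a t : Fin m,
      (I.filter (· - a < t)).card ≤
          ((univ \ P.parts.biUnion (maxAt a)).filter (· - a < t)).card ↔
        (P.parts.filter fun B => ∀ x ∈ B, x - a < t).card ≤
          ((univ \ I).filter (· - a < t)).card := by
    intro a t
    rw [← card_filter_biUnion_maxAt]
    have h1 := hcompl I (· - a < t)
    have h2 := hcompl (P.parts.biUnion (maxAt a)) (· - a < t)
    omega
  have hcardI := hcard I
  simp only [sdomLE_iff_card_filter_lt, hiff]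
  constructor
  · intro h a
    refine ⟨?_, hI, fun t => card_filter_parts_le P h _⟩
    have hsum := sum_card_parts_inter P (univ \ I)
    rw [sum_congr rfl h, ← card_eq_sum_ones] at hsum
    have hM := hcard (P.parts.biUnion (maxAt a))
    rw [card_biUnion_maxAt] at hM
    omega
  · intro h
    refine hP.card_inter_eq_one ?_ fun a t => (h a).2.2 t
    have hM := hcard (P.parts.biUnion (maxAt 0))
    rw [card_biUnion_maxAt, (h 0).1] at hM
    omega

end Partition

section Dual

variable {n : ℕ} (σ : NCP n)

theorem dualRel_iff (i j : Fin n) :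
    dualRel σ i j ↔
      ∀ B ∈ σ.parts, ∀ x ∈ B, ∀ y ∈ B, ((x ≤ i ↔ x ≤ j) ↔ (y ≤ i ↔ y ≤ j)) := by
  rcases eq_or_ne i j with rfl | hij
  · simp [dualRel]
  have hmem : ∀ {i j : Fin n}, i < j → ∀ x, x ∈ cIoc i j ↔ ¬ (x ≤ i ↔ x ≤ j) := by
    intro i j h x
    simp only [cIoc, mem_filter, mem_univ, true_and, if_pos h]
    simp only [Fin.lt_def, Fin.le_def] at h ⊢
    omega
  have hmem' : ∀ {i j : Fin n}, j < i → ∀ x, x ∈ cIoc i j ↔ (x ≤ i ↔ x ≤ j) := by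
    intro i j h x
    simp only [cIoc, mem_filter, mem_univ, true_and, if_neg h.not_gt]
    simp only [Fin.lt_def, Fin.le_def] at h ⊢
    omega
  simp only [dualRel, hij, false_or, not_exists, not_and, Finset.Nonempty, mem_inter]
  rcases hij.lt_or_gt with h | h
  · simp only [hmem h, hmem' h]
    grind
  · simp only [hmem h, hmem' h]
    grind

theorem dualRel_refl (i : Fin n) : dualRel σ i i := Or.inl rfl

variable {σ}

theorem dualRel.symm {i j : Fin n} (h : dualRel σ i j) : dualRel σ j i := by
  rw [dualRel_iff] at h ⊢
  intro B hB x hx y hy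
  have := h B hB x hx y hy
  tauto

theorem dualRel.trans {i j k : Fin n} (h : dualRel σ i j) (h' : dualRel σ j k) :
    dualRel σ i k := by
  rw [dualRel_iff] at h h' ⊢
  intro B hB x hx y hy
  have h1 := h B hB x hx y hy
  have h2 := h' B hB x hx y hy
  tauto

theorem dualRel.of_crossing {i j k l : Fin n} (hij : i < j) (hjk : j < k) (hkl : k < l)
    (h : dualRel σ i k) (h' : dualRel σ j l) : dualRel σ i j := by
  rw [dualRel_iff] at h h' ⊢
  intro B hB x hx y hy
  have h1 := h B hB x hx y hy
  have h2 := h' B hB x hx y hy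
  simp only [Fin.lt_def, Fin.le_def] at *
  omega

theorem dualRel.filter_eq {i j : Fin n} (h : dualRel σ i j) :
    univ.filter (dualRel σ i) = univ.filter (dualRel σ j) := by
  ext k
  simp only [mem_filter, mem_univ, true_and]
  exact ⟨h.symm.trans, h.trans⟩

end Dual

theorem bar_injective {n : ℕ} : Function.Injective (bar (n := n)) := by
  intro i j h
  simp only [bar, Fin.mk.injEq] at h
  exact Fin.ext (by omega)

theorem til_injective {n : ℕ} : Function.Injective (til (n := n)) := by
  intro i j h
  simp only [til, Fin.mk.injEq] at h
  exact Fin.ext (by omega)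

theorem bar_ne_til {n : ℕ} (i j : Fin n) : bar i ≠ til j := by
  intro h
  simp only [bar, til, Fin.mk.injEq] at h
  omega

theorem exists_bar_or_til {n : ℕ} (x : Fin (2 * n)) : (∃ i, x = bar i) ∨ ∃ i, x = til i := by
  have := x.isLt
  rcases Nat.even_or_odd' x.val with ⟨k, hk | hk⟩
  · exact Or.inl ⟨⟨k, by omega⟩, Fin.ext hk⟩
  · exact Or.inr ⟨⟨k, by omega⟩, Fin.ext hk⟩

/-- The partition of `[2n]` formed by the blocks of `σ` and of its dual. -/
def bicolored {n : ℕ} (σ : NCP n) : Finpartition (univ : Finset (Fin (2 * n))) where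
  parts := (σ.parts.image fun B => B.image bar) ∪
    (univ.image fun i => (univ.filter (dualRel σ i)).image til)
  supIndep := by
    rw [supIndep_iff_pairwiseDisjoint]
    intro B hB C hC hBC
    simp only [coe_union, coe_image, Set.mem_union, Set.mem_image, mem_coe] at hB hC
    simp only [Function.onFun, id]
    rcases hB with ⟨B, hB, rfl⟩ | ⟨i, -, rfl⟩ <;> rcases hC with ⟨C, hC, rfl⟩ | ⟨j, -, rfl⟩
    · rw [disjoint_image bar_injective]
      exact σ.disjoint hB hC fun h => hBC (h ▸ rfl)
    · simp only [disjoint_left, mem_image]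
      rintro _ ⟨k, -, rfl⟩ ⟨l, -, h⟩
      exact bar_ne_til k l h.symm
    · simp only [disjoint_left, mem_image]
      rintro _ ⟨k, -, rfl⟩ ⟨l, -, h⟩
      exact bar_ne_til l k h
    · rw [disjoint_image til_injective, disjoint_left]
      intro k hi hj
      simp only [mem_filter, mem_univ, true_and] at hi hj
      exact hBC (by rw [(hi.trans hj.symm).filter_eq])
  sup_parts := by
    rw [eq_univ_iff_forall]
    intro x
    simp only [mem_sup, mem_union, mem_image, id]
    rcases exists_bar_or_til x with ⟨i, rfl⟩ | ⟨i, rfl⟩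
    · exact ⟨_, Or.inl ⟨σ.part i, σ.part_mem.2 (mem_univ i), rfl⟩,
        mem_image_of_mem _ (σ.mem_part (mem_univ i))⟩
    · exact ⟨_, Or.inr ⟨i, mem_univ i, rfl⟩,
        mem_image_of_mem _ (mem_filter.2 ⟨mem_univ i, dualRel_refl σ i⟩)⟩
  bot_notMem := by
    simp only [bot_eq_empty, mem_union, mem_image, image_eq_empty, not_or, not_exists, not_and]
    refine ⟨fun B hB h => (σ.nonempty_of_mem_parts hB).ne_empty h, fun i _ h => ?_⟩
    exact notMem_empty i (h ▸ mem_filter.2 ⟨mem_univ i, dualRel_refl σ i⟩)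

theorem IsNoncrossing.bicolored {n : ℕ} {σ : NCP n} (hσ : IsNoncrossing σ) :
    (bicolored σ).Noncrossing := by
  intro B hB C hC a ha b hb c hc d hd hab hbc hcd
  simp only [_root_.bicolored, mem_union, mem_image] at hB hC
  rcases hB with ⟨B, hB, rfl⟩ | ⟨p, -, rfl⟩ <;> rcases hC with ⟨C, hC, rfl⟩ | ⟨q, -, rfl⟩ <;>
    simp only [mem_image, mem_filter, mem_univ, true_and] at ha hb hc hd <;>
    obtain ⟨i, hi, rfl⟩ := ha <;> obtain ⟨j, hj, rfl⟩ := hb <;>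
    obtain ⟨k, hk, rfl⟩ := hc <;> obtain ⟨l, hl, rfl⟩ := hd <;>
    simp only [bar, til, Fin.lt_def] at hab hbc hcd
  · obtain ⟨D, hD, hiD, hjD⟩ := hσ i j k l (Fin.lt_def.2 (by omega)) (Fin.lt_def.2 (by omega))
      (Fin.lt_def.2 (by omega)) ⟨B, hB, hi, hk⟩ ⟨C, hC, hj, hl⟩
    rw [σ.eq_of_mem_parts hB hD hi hiD, σ.eq_of_mem_parts hC hD hj hjD]
  · have h := (dualRel_iff σ j l).1 (hj.symm.trans hl) B hB i hi k hk
    simp only [Fin.le_def] at h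
    omega
  · have h := (dualRel_iff σ i k).1 (hi.symm.trans hk) C hC j hj l hl
    simp only [Fin.le_def] at h
    omega
  · have h := dualRel.of_crossing (Fin.lt_def.2 (by omega)) (Fin.lt_def.2 (by omega))
      (Fin.lt_def.2 (by omega)) (hi.symm.trans hk) (hj.symm.trans hl)
    rw [((hi.trans h).trans hj.symm).filter_eq]

theorem IaP_eq {n : ℕ} (σ : NCP n) (a : Fin (2 * n)) :
    IaP σ a = univ \ (bicolored σ).parts.biUnion (maxAt a) := by
  simp only [IaP, bicolored, union_biUnion, image_biUnion]

theorem concordant_iff {n : ℕ} (σ : NCP n) (I : Finset (Fin (2 * n))) :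
    Concordant σ I ↔
      I.card = n - 1 ∧ ∀ B ∈ (bicolored σ).parts, (B ∩ (univ \ I)).card = 1 := by
  simp only [Concordant, bicolored, mem_union, mem_image, mem_univ, true_and, or_imp, forall_and,
    forall_exists_index, and_imp, forall_apply_eq_imp_iff₂, forall_apply_eq_imp_iff]

theorem stmt15 (n : ℕ) (σ : NCP n) (hσ : IsNoncrossing σ)
    (I : Finset (Fin (2*n))) (hI : I.card = n - 1) :
    Concordant σ I ↔ ∀ a : Fin (2*n), sdomLE (n-1) a (IaP σ a) I := by
  rcases n.eq_zero_or_pos with rfl | hn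
  · rw [concordant_iff]
    refine ⟨fun _ a => a.elim0, fun _ => ⟨hI, fun B hB => ?_⟩⟩
    obtain ⟨x, -⟩ := (bicolored σ).nonempty_of_mem_parts hB
    exact x.elim0
  · have : NeZero (2 * n) := ⟨by omega⟩
    simp only [concordant_iff, IaP_eq, hI, true_and]
    exact hσ.bicolored.card_inter_eq_one_iff hI

end
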